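/- Let α be a type, let I be a type of labels equipped with a transitive, well-founded (hence irreflexive) order ≻, and let (→_ℓ)_{ℓ∈I} be a family of binary relations on α with union → = ⋃_{ℓ∈I} →_ℓ. Suppose that every local peak is decreasing, i.e., for all labels ℓ, κ and all a, b, c with b ←_ℓ a and a →_κ c there exist b₁, b₂, c₂, c₁ such that b ↔*_{⋎ℓ} b₁, (b₁ →_κ b₂ or b₁ = b₂), b₂ ↔*_{⋎{ℓ,κ}} c₂, (c₁ →_ℓ c₂ or c₁ = c₂), and c₁ ↔*_{⋎κ} c. Then → is confluent: whenever a →* b and a →* c there exists d with b →* d and c →* d. -/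

import Mathlib

/-- Union of a labelled family of relations. -/
def LabelledUnion {α I : Type*} (r : I → α → α → Prop) : α → α → Prop :=
  fun a b => ∃ l, r l a b

/-- Union of the relations whose label lies in `J`. -/
def RelOver {α I : Type*} (r : I → α → α → Prop) (J : Set I) : α → α → Prop :=
  fun a b => ∃ l ∈ J, r l a b

/-- Conversion: reflexive–transitive closure of the symmetric closure. -/
def Conv {α : Type*} (r : α → α → Prop) : α → α → Prop :=
  Relation.ReflTransGen (fun a b => r a b ∨ r b a)

/-!
Ranking labels by ordinals makes them well-ordered, so every nontrivial conversion has a maximal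
label `t`. By well-founded induction on `m`, peaks remain decreasing when their two sources are only
convertible below `m`: at the maximal label `t < m` of that conversion, the relation "at most one
`t`-step modulo conversion below `t`" has the diamond property by the induction hypothesis, so the
two sources have a common reduct, and both steps can be pushed along the reductions to it. A second
induction replaces the conversions preceding a step by genuine reductions, and a third one then
turns every conversion with maximal label `t` into two reductions whose end points are convertible
below `t`.
-/

namespace DecreasingDiagrams

open Relation Set

section Conversions

variable {α I : Type*} {r : I → α → α → Prop} {a b : α}

theorem relOver_mono {J K : Set I} (hJK : J ⊆ K) : RelOver r J ≤ RelOver r K :=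
  fun _ _ ⟨l, hl, h⟩ => ⟨l, hJK hl, h⟩

theorem relOver_univ : RelOver r univ = LabelledUnion r := by
  ext
  simp [RelOver, LabelledUnion]

theorem conv_eq_eqvGen (s : α → α → Prop) : Conv s = Relation.EqvGen s :=
  EqvGen.reflTransGen_symmGen s

theorem equivalence_conv (s : α → α → Prop) : Equivalence (Conv s) :=
  conv_eq_eqvGen s ▸ EqvGen.is_equivalence s

theorem conv_of_rel {s : α → α → Prop} (h : s a b) : Conv s a b :=
  .single (.inl h)

theorem conv_le_of_equivalence {s t : α → α → Prop} (ht : Equivalence t) (h : s ≤ t) :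
    Conv s ≤ t :=
  reflTransGen_le_of_equivalence_of_le ht fun _ _ hs =>
    hs.elim (h _ _) fun hs => ht.symm (h _ _ hs)

theorem conv_mono {s t : α → α → Prop} (h : s ≤ t) : Conv s ≤ Conv t :=
  conv_le_of_equivalence (equivalence_conv t) fun _ _ hs => conv_of_rel (h _ _ hs)

theorem conv_of_reflTransGen {s : α → α → Prop} (h : ReflTransGen s a b) : Conv s a b :=
  ReflTransGen.mono (fun _ _ => Or.inl) _ _ h

theorem Conv.exists_max_label [LinearOrder I] {J : Set I} (h : Conv (RelOver r J) a b) :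
    a = b ∨ ∃ t ∈ J, Conv (RelOver r (Iic t)) a b := by
  induction h with
  | refl => exact .inl rfl
  | @tail b c _ hbc ih =>
    obtain ⟨l, hl, hbc⟩ : ∃ l ∈ J, SymmGen (r l) b c := by
      rcases hbc with ⟨l, hl, h⟩ | ⟨l, hl, h⟩
      exacts [⟨l, hl, .inl h⟩, ⟨l, hl, .inr h⟩]
    have step {t : I} (ht : l ≤ t) : Conv (RelOver r (Iic t)) b c :=
      .single (hbc.imp (fun h => ⟨l, ht, h⟩) fun h => ⟨l, ht, h⟩)
    rcases ih with rfl | ⟨t, ht, hab⟩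
    · exact .inr ⟨l, hl, step le_rfl⟩
    · refine .inr ⟨max t l, max_rec' (· ∈ J) ht hl, ?_⟩
      exact (conv_mono (relOver_mono (Iic_subset_Iic.2 (le_max_left t l))) _ _ hab).trans
        (step (le_max_right t l))

end Conversions

section LinearOrder

variable {α L : Type*} [LinearOrder L] {r : L → α → α → Prop} {m p q t : L}
  {a b c u y y' z z' : α}

variable (r) in
/-- Conversion using only labels strictly below `m`. -/
def ConvBelow (m : L) : α → α → Prop :=
  Conv (RelOver r (Iio m))

variable (r) in
/-- At most one `p`-step, preceded by a conversion below `t` and followed by a conversion below `p`.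
For `t = p` these are the steps modulo conversion to which the Church–Rosser argument applies. -/
def StepModulo (t p : L) (a d : α) : Prop :=
  ∃ b c, ConvBelow r t a b ∧ ReflGen (r p) b c ∧ ConvBelow r p c d

variable (r) in
/-- The decreasing completion of a peak `y ←_p · →_q z`. Since labels are linearly ordered, the
middle conversion, below `p` or below `q`, is one below `max p q`. -/
def DecreasingValley (p q : L) (y z : α) : Prop :=
  ∃ b₁ b₂ c₂ c₁, ConvBelow r p y b₁ ∧ ReflGen (r q) b₁ b₂ ∧ ConvBelow r (max p q) b₂ c₂ ∧
    ReflGen (r p) c₁ c₂ ∧ ConvBelow r q c₁ z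

variable (r) in
/-- A conversion below `m` in front of a step with label at least `m` can be replaced by a reduction
below `m`, possibly at the cost of losing the step and of a longer conversion after it. -/
def PostponesConversion (m : L) : Prop :=
  ∀ ⦃p⦄, m ≤ p → ∀ ⦃a y⦄, StepModulo r m p a y →
    ∃ b c, ReflTransGen (RelOver r (Iio m)) a b ∧ ReflGen (r p) b c ∧ ConvBelow r p c y

variable (r) in
/-- Peaks with labels at least `m` are decreasing even if conversion below `m` is allowed between
the sources of their two steps. -/
def DecreasingModulo (m : L) : Prop :=
  ∀ ⦃p q⦄, m ≤ p → m ≤ q → ∀ ⦃a y z⦄, StepModulo r m p a y → StepModulo r m q a z →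
    DecreasingValley r p q y z

theorem ConvBelow.refl (m : L) (a : α) : ConvBelow r m a a :=
  (equivalence_conv _).refl a

theorem ConvBelow.symm (h : ConvBelow r m a b) : ConvBelow r m b a :=
  (equivalence_conv _).symm h

theorem ConvBelow.trans (hab : ConvBelow r m a b) (hbc : ConvBelow r m b c) : ConvBelow r m a c :=
  (equivalence_conv _).trans hab hbc

theorem ConvBelow.mono (htm : t ≤ m) (h : ConvBelow r t a b) : ConvBelow r m a b :=
  conv_mono (relOver_mono (Iio_subset_Iio htm)) _ _ h

theorem convBelow_of_reflGen (hpm : p < m) (h : ReflGen (r p) a b) : ConvBelow r m a b := by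
  cases h with
  | refl => exact .refl m a
  | single h => exact conv_of_rel ⟨p, hpm, h⟩

theorem StepModulo.of_reflGen (h : ReflGen (r p) a b) : StepModulo r t p a b :=
  ⟨a, b, .refl t a, h, .refl p b⟩

theorem StepModulo.convBelow (htm : t < m) (h : StepModulo r t t a b) : ConvBelow r m a b := by
  obtain ⟨x, y, hax, hxy, hyb⟩ := h
  exact (hax.mono htm.le).trans ((convBelow_of_reflGen htm hxy).trans (hyb.mono htm.le))

theorem StepModulo.conv_left (hab : ConvBelow r t a b) (h : StepModulo r t p b c) :
    StepModulo r t p a c := by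
  obtain ⟨x, y, hbx, hxy, hyc⟩ := h
  exact ⟨x, y, hab.trans hbx, hxy, hyc⟩

theorem StepModulo.conv_right (h : StepModulo r t p a b) (hbc : ConvBelow r p b c) :
    StepModulo r t p a c := by
  obtain ⟨x, y, hax, hxy, hyb⟩ := h
  exact ⟨x, y, hax, hxy, hyb.trans hbc⟩

theorem stepModulo_of_relOver_Iic (h : RelOver r (Iic t) a b) : StepModulo r t t a b := by
  obtain ⟨l, hl, h⟩ := h
  rcases (mem_Iic.1 hl).lt_or_eq with hl | rfl
  · exact ⟨b, b, convBelow_of_reflGen hl (.single h), .refl, .refl t b⟩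
  · exact .of_reflGen (.single h)

theorem DecreasingValley.conv (hy : ConvBelow r p y y') (h : DecreasingValley r p q y' z')
    (hz : ConvBelow r q z' z) : DecreasingValley r p q y z := by
  obtain ⟨b₁, b₂, c₂, c₁, hyb, hb, hbc, hc, hcz⟩ := h
  exact ⟨b₁, b₂, c₂, c₁, hy.trans hyb, hb, hbc, hc, hcz.trans hz⟩

theorem decreasingValley_of_reflGen
    (hdec : ∀ ⦃p q a y z⦄, r p a y → r q a z → DecreasingValley r p q y z)
    (hy : ReflGen (r p) a y) (hz : ReflGen (r q) a z) : DecreasingValley r p q y z := by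
  cases hy with
  | refl => exact ⟨a, z, z, z, .refl p a, hz, .refl _ z, .refl, .refl q z⟩
  | single hy =>
    cases hz with
    | refl => exact ⟨y, y, y, a, .refl p y, .refl, .refl _ y, .single hy, .refl q a⟩
    | single hz => exact hdec hy hz

namespace DecreasingModulo

theorem diamond (hG : DecreasingModulo r t) (hb : StepModulo r t t a b)
    (hc : StepModulo r t t a c) : ∃ d, StepModulo r t t b d ∧ StepModulo r t t c d := by
  obtain ⟨b₁, b₂, c₂, c₁, hbb₁, hb, hbc, hc, hc₁c⟩ := hG le_rfl le_rfl hb hc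
  rw [max_self] at hbc
  exact ⟨b₂, ⟨b₁, b₂, hbb₁, hb, .refl t b₂⟩, ⟨c₁, c₂, hc₁c.symm, hc, hbc.symm⟩⟩

theorem join_of_conv_Iic (hG : DecreasingModulo r t) (h : Conv (RelOver r (Iic t)) a b) :
    Join (ReflTransGen (StepModulo r t t)) a b := by
  have hequiv : Equivalence (Join (ReflTransGen (StepModulo r t t))) :=
    equivalence_join_reflTransGen fun x y z hy hz =>
      let ⟨d, hyd, hzd⟩ := hG.diamond hy hz
      ⟨d, .single hyd, .single hzd⟩
  exact conv_le_of_equivalence hequiv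
    (fun _ y h => ⟨y, .single (stepModulo_of_relOver_Iic h), .refl⟩) _ _ h

theorem eq_or_join_of_convBelow (hG : ∀ t < m, DecreasingModulo r t) (h : ConvBelow r m a b) :
    a = b ∨ ∃ t < m, Join (ReflTransGen (StepModulo r t t)) a b :=
  (Conv.exists_max_label h).imp_right fun ⟨t, ht, h⟩ => ⟨t, ht, (hG t ht).join_of_conv_Iic h⟩

theorem stepModulo_of_stepModulo (hG : DecreasingModulo r t) (htp : t < p)
    (hu : StepModulo r t t a u) (hy : StepModulo r t p a y) : StepModulo r t p u y := by
  obtain ⟨b₁, b₂, c₂, c₁, hyb, hb, hbc, hc, hcu⟩ := hG htp.le le_rfl hy hu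
  rw [max_eq_left htp.le] at hbc
  have hyc : ConvBelow r p y c₂ := hyb.trans ((convBelow_of_reflGen htp hb).trans hbc)
  exact ⟨c₁, c₂, hcu.symm, hc, hyc.symm⟩

theorem stepModulo_of_reflTransGen (hG : DecreasingModulo r t) (htp : t < p)
    (hu : ReflTransGen (StepModulo r t t) a u) (hy : StepModulo r t p a y) :
    StepModulo r t p u y := by
  induction hu with
  | refl => exact hy
  | tail _ hu ih => exact hG.stepModulo_of_stepModulo htp hu ih

end DecreasingModulo

theorem PostponesConversion.exists_reflTransGen (hB : PostponesConversion r t)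
    (h : ReflTransGen (StepModulo r t t) a u) :
    ∃ b, ReflTransGen (RelOver r (Iic t)) a b ∧ ConvBelow r t b u := by
  induction h with
  | refl => exact ⟨a, .refl, .refl t a⟩
  | tail _ huv ih =>
    obtain ⟨b, hab, hbu⟩ := ih
    obtain ⟨c, d, hbc, hcd, hdv⟩ := hB le_rfl (huv.conv_left hbu)
    have hbc' : ReflTransGen (RelOver r (Iic t)) b c :=
      ReflTransGen.mono (relOver_mono Iio_subset_Iic_self) _ _ hbc
    have hcd' : ReflTransGen (RelOver r (Iic t)) c d :=
      (ReflGen.mono (fun _ _ h => ⟨t, le_rfl, h⟩) _ _ hcd).to_reflTransGen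
    exact ⟨d, hab.trans (hbc'.trans hcd'), hdv⟩

variable [WellFoundedLT L]

theorem decreasingModulo
    (hdec : ∀ ⦃p q a y z⦄, r p a y → r q a z → DecreasingValley r p q y z) (m : L) :
    DecreasingModulo r m := by
  induction m using WellFoundedLT.induction with
  | ind m ih =>
    rintro p q hp hq a y z ⟨a₁, y', haa₁, hy, hy'⟩ ⟨a₂, z', haa₂, hz, hz'⟩
    rcases DecreasingModulo.eq_or_join_of_convBelow ih (haa₁.symm.trans haa₂) with
      rfl | ⟨t, ht, u, ha₁u, ha₂u⟩
    · exact (decreasingValley_of_reflGen hdec hy hz).conv hy'.symm hz'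
    · have htp := ht.trans_le hp
      have htq := ht.trans_le hq
      have huy := (ih t ht).stepModulo_of_reflTransGen htp ha₁u (.of_reflGen hy)
      have huz := (ih t ht).stepModulo_of_reflTransGen htq ha₂u (.of_reflGen hz)
      exact (ih t ht htp.le htq.le huy huz).conv hy'.symm hz'

theorem postponesConversion (hG : ∀ t, DecreasingModulo r t) (m : L) :
    PostponesConversion r m := by
  induction m using WellFoundedLT.induction with
  | ind m ih =>
    rintro p hp a y ⟨a', y', haa', hy, hy'⟩
    rcases DecreasingModulo.eq_or_join_of_convBelow (fun t _ => hG t) haa' with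
      rfl | ⟨t, ht, u, hau, ha'u⟩
    · exact ⟨a, y', .refl, hy, hy'⟩
    · have htp := ht.trans_le hp
      have huy := ((hG t).stepModulo_of_reflTransGen htp ha'u (.of_reflGen hy)).conv_right hy'
      obtain ⟨b, hab, hbu⟩ := (ih t ht).exists_reflTransGen hau
      obtain ⟨c, d, hbc, hcd, hdy⟩ := ih t ht htp.le (huy.conv_left hbu)
      have hac : ReflTransGen (RelOver r (Iic t)) a c :=
        hab.trans (ReflTransGen.mono (relOver_mono Iio_subset_Iic_self) _ _ hbc)
      exact ⟨c, d, ReflTransGen.mono (relOver_mono (Iic_subset_Iio.2 ht)) _ _ hac, hcd, hdy⟩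

theorem join_of_conv_Iic (hG : ∀ t, DecreasingModulo r t) (t : L) :
    Conv (RelOver r (Iic t)) ≤ Join (ReflTransGen (RelOver r (Iic t))) := by
  induction t using WellFoundedLT.induction with
  | ind t ih =>
    intro a b hab
    obtain ⟨u, hau, hbu⟩ := (hG t).join_of_conv_Iic hab
    obtain ⟨a', haa', ha'u⟩ := (postponesConversion hG t).exists_reflTransGen hau
    obtain ⟨b', hbb', hb'u⟩ := (postponesConversion hG t).exists_reflTransGen hbu
    rcases Conv.exists_max_label (ha'u.trans hb'u.symm) with rfl | ⟨s, hs, hab'⟩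
    · exact ⟨a', haa', hbb'⟩
    · obtain ⟨d, had, hbd⟩ := ih s hs _ _ hab'
      have mono := ReflTransGen.mono (relOver_mono (r := r) (Iic_subset_Iic.2 (le_of_lt hs)))
      exact ⟨d, haa'.trans (mono _ _ had), hbb'.trans (mono _ _ hbd)⟩

theorem join_of_conv
    (hdec : ∀ ⦃p q a y z⦄, r p a y → r q a z → DecreasingValley r p q y z)
    (h : Conv (LabelledUnion r) a b) : Join (ReflTransGen (LabelledUnion r)) a b := by
  rw [← relOver_univ] at h ⊢
  rcases Conv.exists_max_label h with rfl | ⟨t, -, hab⟩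
  · exact ⟨a, .refl, .refl⟩
  · obtain ⟨d, had, hbd⟩ := join_of_conv_Iic (decreasingModulo hdec) t _ _ hab
    have mono := ReflTransGen.mono (relOver_mono (r := r) (subset_univ (Iic t)))
    exact ⟨d, mono _ _ had, mono _ _ hbd⟩

end LinearOrder

section Relabel

variable {α I L : Type*} {r : I → α → α → Prop} {f : I → L}

/-- The family obtained by giving every `l`-step the label `f l`. As `f` need not be injective, this
may merge several of the given relations. -/
def relabel (f : I → L) (r : I → α → α → Prop) (o : L) : α → α → Prop :=
  RelOver r (f ⁻¹' {o})

theorem relabel_of_rel {l : I} : r l ≤ relabel f r (f l) :=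
  fun _ _ h => ⟨l, rfl, h⟩

theorem labelledUnion_relabel : LabelledUnion (relabel f r) = LabelledUnion r := by
  ext
  simp [LabelledUnion, relabel, RelOver]

theorem relOver_le_relabel {J : Set I} {K : Set L} (hJK : MapsTo f J K) :
    RelOver r J ≤ RelOver (relabel f r) K :=
  fun _ _ ⟨l, hl, h⟩ => ⟨f l, hJK hl, relabel_of_rel _ _ h⟩

theorem decreasingValley_relabel [LinearOrder L] {lt : I → I → Prop}
    (hf : ∀ ⦃j l⦄, lt j l → f j < f l) {l k : I} {b b₁ b₂ c₂ c₁ c : α}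
    (hb : Conv (RelOver r {j | lt j l}) b b₁) (hb₁ : r k b₁ b₂ ∨ b₁ = b₂)
    (hbc : Conv (RelOver r ({j | lt j l} ∪ {j | lt j k})) b₂ c₂)
    (hc₁ : r l c₁ c₂ ∨ c₁ = c₂) (hc : Conv (RelOver r {j | lt j k}) c₁ c) :
    DecreasingValley (relabel f r) (f l) (f k) b c := by
  have conv {J : Set I} {m : L} (hJ : MapsTo f J (Iio m)) {x y : α} (h : Conv (RelOver r J) x y) :
      ConvBelow (relabel f r) m x y :=
    conv_mono (relOver_le_relabel hJ) _ _ h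
  have step {l : I} {x y : α} (h : r l x y ∨ x = y) : ReflGen (relabel f r (f l)) x y :=
    (reflGen_iff _ _ _).2 (h.symm.imp Eq.symm (relabel_of_rel _ _))
  have hmax : MapsTo f ({j | lt j l} ∪ {j | lt j k}) (Iio (max (f l) (f k))) := by
    rintro j (hj | hj)
    exacts [lt_max_of_lt_left (hf hj), lt_max_of_lt_right (hf hj)]
  exact ⟨b₁, b₂, c₂, c₁, conv (fun _ hj => hf hj) hb, step hb₁, conv hmax hbc, step hc₁,
    conv (fun _ hj => hf hj) hc⟩

end Relabel

end DecreasingDiagrams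

open DecreasingDiagrams in
theorem stmt_0_general {α I : Type*} (lt : I → I → Prop) (hwf : WellFounded lt)
    (r : I → α → α → Prop)
    (hdec : ∀ l k a b c, r l a b → r k a c →
      ∃ b₁ b₂ c₂ c₁,
        Conv (RelOver r {j | lt j l}) b b₁ ∧
        (r k b₁ b₂ ∨ b₁ = b₂) ∧
        Conv (RelOver r ({j | lt j l} ∪ {j | lt j k})) b₂ c₂ ∧
        (r l c₁ c₂ ∨ c₁ = c₂) ∧
        Conv (RelOver r {j | lt j k}) c₁ c) :
    ∀ a b c, Relation.ReflTransGen (LabelledUnion r) a b →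
      Relation.ReflTransGen (LabelledUnion r) a c →
      ∃ d, Relation.ReflTransGen (LabelledUnion r) b d ∧
           Relation.ReflTransGen (LabelledUnion r) c d := by
  intro a b c hab hac
  have : IsWellFounded I lt := ⟨hwf⟩
  have hbc : Conv (LabelledUnion r) b c :=
    (equivalence_conv _).trans ((equivalence_conv _).symm (conv_of_reflTransGen hab))
      (conv_of_reflTransGen hac)
  rw [← labelledUnion_relabel (f := IsWellFounded.rank lt)] at hbc ⊢
  refine join_of_conv ?_ hbc
  rintro _ _ x y z ⟨l, rfl, hy⟩ ⟨k, rfl, hz⟩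
  obtain ⟨b₁, b₂, c₂, c₁, hb, hb₁, hm, hc₁, hc⟩ := hdec l k x y z hy hz
  exact decreasingValley_relabel (lt := lt) (fun _ _ => IsWellFounded.rank_lt_of_rel)
    hb hb₁ hm hc₁ hc

/-- Decreasing diagrams imply confluence (van Oostrom). Here `lt j l` means `l ≻ j`. -/
theorem stmt_0 {α I : Type*} (lt : I → I → Prop)
    (htrans : Transitive lt) (hwf : WellFounded lt)
    (r : I → α → α → Prop)
    (hdec : ∀ l k a b c, r l a b → r k a c →
      ∃ b₁ b₂ c₂ c₁,
        Conv (RelOver r {j | lt j l}) b b₁ ∧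
        (r k b₁ b₂ ∨ b₁ = b₂) ∧
        Conv (RelOver r ({j | lt j l} ∪ {j | lt j k})) b₂ c₂ ∧
        (r l c₁ c₂ ∨ c₁ = c₂) ∧
        Conv (RelOver r {j | lt j k}) c₁ c) :
    ∀ a b c, Relation.ReflTransGen (LabelledUnion r) a b →
      Relation.ReflTransGen (LabelledUnion r) a c →
      ∃ d, Relation.ReflTransGen (LabelledUnion r) b d ∧
           Relation.ReflTransGen (LabelledUnion r) c d := by
  exact stmt_0_general lt hwf r hdec
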